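/- Let X be a real Banach space with a partially greedy Schauder basis (e_n). Then there exists a constant C₁ such that for every x ∈ X, every m ∈ ℕ, every greedy ordering for x, every finite set A ⊆ {1, …, α_m(x) − 1} with |A| ≤ m, and every y ∈ X satisfying e_i^*(y) = e_i^*(x) for all i ∉ A, one has ‖x‖ ≤ C₁‖y‖. -/

import Mathlib

open Filter Topology

/-- A Schauder basis of a real normed space `X`, given by basis vectors `e n` together with
biorthogonal (coordinate) functionals `f n`, such that every `x` is the limit of its
partial-sum expansion `∑_{n < N} f n x • e n`. -/
structure SchauderBasisSys (X : Type*) [NormedAddCommGroup X] [NormedSpace ℝ X] where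
  e : ℕ → X
  f : ℕ → X →L[ℝ] ℝ
  biorth : ∀ m n : ℕ, f m (e n) = if m = n then (1 : ℝ) else 0
  expansion : ∀ x : X,
    Filter.Tendsto (fun N : ℕ => ∑ n ∈ Finset.range N, f n x • e n) Filter.atTop (nhds x)

namespace SchauderBasisSys

variable {X : Type*} [NormedAddCommGroup X] [NormedSpace ℝ X]

/-- The coordinate projection onto a finite set `A` of indices: `P_A x = ∑_{i ∈ A} e_i^*(x) e_i`. -/
noncomputable def P (S : SchauderBasisSys X) (A : Finset ℕ) (x : X) : X :=
  ∑ i ∈ A, S.f i x • S.e i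

/-- The indicator vector `1_A = ∑_{i ∈ A} e_i`. -/
noncomputable def ind (S : SchauderBasisSys X) (A : Finset ℕ) : X :=
  ∑ i ∈ A, S.e i

/-- A greedy ordering for `x`: an injection `ρ : ℕ → ℕ` whose range contains the support of `x`
and which rearranges the coordinates of `x` in nonincreasing order of absolute value. -/
def IsGreedyOrdering (S : SchauderBasisSys X) (x : X) (ρ : ℕ → ℕ) : Prop :=
  Function.Injective ρ ∧ (∀ n : ℕ, S.f n x ≠ 0 → n ∈ Set.range ρ) ∧
    ∀ j k : ℕ, j ≤ k → |S.f (ρ k) x| ≤ |S.f (ρ j) x|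

/-- The greedy set `Λ_m(x) = {ρ(0), …, ρ(m-1)}` associated to a greedy ordering `ρ`. -/
def Lam (ρ : ℕ → ℕ) (m : ℕ) : Finset ℕ := (Finset.range m).image ρ

/-- The `m`-th greedy approximation `G_m(x) = ∑_{j < m} e_{ρ(j)}^*(x) e_{ρ(j)}`. -/
noncomputable def G (S : SchauderBasisSys X) (x : X) (ρ : ℕ → ℕ) (m : ℕ) : X :=
  ∑ j ∈ Finset.range m, S.f (ρ j) x • S.e (ρ j)

/-- Quasi-greedy: `‖G_m(x)‖ ≤ K ‖x‖` uniformly. -/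
def QuasiGreedy (S : SchauderBasisSys X) : Prop :=
  ∃ K : ℝ, ∀ (x : X) (ρ : ℕ → ℕ) (m : ℕ),
    S.IsGreedyOrdering x ρ → ‖S.G x ρ m‖ ≤ K * ‖x‖

/-- Conservative: `‖1_A‖ ≤ Γ ‖1_B‖` whenever `|A| ≤ |B|` and `max A < min B`. -/
def Conservative (S : SchauderBasisSys X) : Prop :=
  ∃ Γ : ℝ, ∀ A B : Finset ℕ, A.card ≤ B.card →
    (∀ i ∈ A, ∀ j ∈ B, i < j) → ‖S.ind A‖ ≤ Γ * ‖S.ind B‖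

/-- Reverse conservative: `‖1_A‖ ≤ Γ ‖1_B‖` whenever `|A| ≤ |B|` and `max B < min A`. -/
def ReverseConservative (S : SchauderBasisSys X) : Prop :=
  ∃ Γ : ℝ, ∀ A B : Finset ℕ, A.card ≤ B.card →
    (∀ i ∈ A, ∀ j ∈ B, j < i) → ‖S.ind A‖ ≤ Γ * ‖S.ind B‖

/-- Partially greedy: `‖x - G_m(x)‖ ≤ C ‖∑_{n ≥ m} e_n^*(x) e_n‖ = C ‖x - P_{[0,m)}(x)‖`. -/
def PartiallyGreedy (S : SchauderBasisSys X) : Prop :=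
  ∃ C : ℝ, ∀ (x : X) (ρ : ℕ → ℕ) (m : ℕ), S.IsGreedyOrdering x ρ →
    ‖x - S.G x ρ m‖ ≤ C * ‖x - S.P (Finset.range m) x‖

/-- Almost greedy: `‖x - G_m(x)‖ ≤ C inf{‖x - P_A(x)‖ : |A| ≤ m}`. -/
def AlmostGreedy (S : SchauderBasisSys X) : Prop :=
  ∃ C : ℝ, ∀ (x : X) (ρ : ℕ → ℕ) (m : ℕ) (A : Finset ℕ), S.IsGreedyOrdering x ρ →
    A.card ≤ m → ‖x - S.G x ρ m‖ ≤ C * ‖x - S.P A x‖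

end SchauderBasisSys

open SchauderBasisSys

/-!
Let `B` consist of the first `|A|` indices of the greedy ordering of `x`, and let `D ⊆ A` consist
of those indices of `A` at which `|e_i^*(y)|` exceeds its least value on `B`. Then `D ∪ B` is a
greedy set of `y`, so partial greediness controls `y - P_{D ∪ B} y`. This vector differs from `x`
by `P_B x` and by a vector on `A` whose coefficients are differences of numbers dominated by the
coefficients of `x` on `B`. Both are controlled by the tail beyond `A` that `x` and `y` share: put
large coefficients below that tail, so that partial greediness swaps them for `B`.

The vectors `e_n` are not assumed bounded below, so the coordinates of a vector need not tend to
zero and it may have no greedy ordering. Greedy sets are therefore extended to greedy orderings for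
partial sums only, and the inequality for arbitrary vectors follows in the limit.
-/

namespace SchauderBasisSys

section Enumeration

lemma card_lam {ρ : ℕ → ℕ} (hρ : Function.Injective ρ) (m : ℕ) : (Lam ρ m).card = m := by
  rw [Lam, Finset.card_image_of_injective _ hρ, Finset.card_range]

lemma apply_mem_lam_iff {ρ : ℕ → ℕ} (hρ : Function.Injective ρ) {k m : ℕ} :
    ρ k ∈ Lam ρ m ↔ k < m := by
  rw [Lam, hρ.mem_finset_image, Finset.mem_range]

lemma lam_succ (ρ : ℕ → ℕ) (m : ℕ) : Lam ρ (m + 1) = insert (ρ m) (Lam ρ m) := by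
  rw [Lam, Lam, Finset.range_add_one, Finset.image_insert]

lemma exists_injective_forall_lam {p : Finset ℕ → ℕ → Prop} (hp : ∀ F, ∃ i ∉ F, p F i) :
    ∃ ρ : ℕ → ℕ, Function.Injective ρ ∧ ∀ k, p (Lam ρ k) (ρ k) := by
  choose next next_notMem hnext using hp
  let ρ : ℕ → ℕ := fun n => next ((fun F => insert (next F) F)^[n] ∅)
  have iterate_eq (n : ℕ) : (fun F => insert (next F) F)^[n] ∅ = Lam ρ n := by
    induction n with
    | zero => rfl
    | succ n ih => rw [lam_succ, ← ih, Function.iterate_succ_apply']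
  have ρ_eq (n : ℕ) : ρ n = next (Lam ρ n) := congrArg next (iterate_eq n)
  have ρ_ne_of_lt (j k : ℕ) (hjk : j < k) : ρ j ≠ ρ k := fun h => next_notMem (Lam ρ k) (by
    rw [← ρ_eq, ← h]
    exact Finset.mem_image_of_mem ρ (Finset.mem_range.2 hjk))
  exact ⟨ρ, Function.Injective.of_lt_imp_ne ρ_ne_of_lt, fun k => ρ_eq k ▸ hnext _⟩

end Enumeration

section GreedySet

/-- A greedy set of a sequence: a finite set of indices outside of which no entry exceeds, in
absolute value, any entry inside. For the coordinates of a vector these are the sets `Λ_m` of its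
greedy orderings, all choices of ties included. -/
def IsGreedySet {ι : Type*} (a : ι → ℝ) (L : Finset ι) : Prop :=
  ∀ i ∈ L, ∀ j ∉ L, |a j| ≤ |a i|

variable {ι : Type*} {a b : ι → ℝ} {A B L : Finset ι}

lemma IsGreedySet.of_abs_le (hL : IsGreedySet a L) (heq : ∀ i ∈ L, b i = a i)
    (hle : ∀ j ∉ L, |b j| ≤ |a j|) : IsGreedySet b L := fun i hi j hj =>
  (hle j hj).trans (heq i hi ▸ hL i hi j hj)

lemma isGreedySet_union [DecidableEq ι] (hA : ∀ i ∈ A, ∃ k ∈ B, |a k| ≤ |a i|)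
    (hB : ∀ i ∈ B, ∀ j ∉ A ∪ B, |a j| ≤ |a i|) : IsGreedySet a (A ∪ B) := by
  intro i hi j hj
  rcases Finset.mem_union.1 hi with hiA | hiB
  · obtain ⟨k, hkB, hk⟩ := hA i hiA
    exact (hB k hkB j hj).trans hk
  · exact hB i hiB j hj

/-- The indices in `A` at which the sequence exceeds, in absolute value, its least entry on `B`:
those that must be added to `B` to make it greedy when only the entries on `A` can spoil
greediness. -/
noncomputable def largeIndices (a : ι → ℝ) (A B : Finset ι) : Finset ι :=
  {i ∈ A | ∃ j ∈ B, |a j| < |a i|}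

lemma abs_le_of_notMem_largeIndices {i j : ι} (hiA : i ∈ A) (hi : i ∉ largeIndices a A B)
    (hj : j ∈ B) : |a i| ≤ |a j| := by
  by_contra! hlt
  exact hi (Finset.mem_filter.2 ⟨hiA, j, hj, hlt⟩)

lemma isGreedySet_largeIndices_union [DecidableEq ι]
    (h : ∀ i ∈ B, ∀ j ∉ B, j ∉ A → |a j| ≤ |a i|) :
    IsGreedySet a (largeIndices a A B ∪ B) := by
  refine isGreedySet_union (fun i hi => ?_) fun i hi j hj => ?_
  · obtain ⟨-, k, hk, hlt⟩ := Finset.mem_filter.1 hi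
    exact ⟨k, hk, hlt.le⟩
  · obtain ⟨hjD, hjB⟩ := Finset.notMem_union.1 hj
    by_cases hjA : j ∈ A
    · exact abs_le_of_notMem_largeIndices hjA hjD hi
    · exact h i hi j hjB hjA

lemma exists_notMem_forall_abs_le [Infinite ι] (ha : a.support.Finite) (F : Finset ι) :
    ∃ i ∉ F, ∀ j ∉ F, |a j| ≤ |a i| := by
  classical
  obtain ⟨i₀, hi₀⟩ := Infinite.exists_notMem_finset F
  obtain ⟨i, hi, hmax⟩ := Finset.exists_max_image (insert i₀ (ha.toFinset \ F)) (|a ·|)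
    (Finset.insert_nonempty _ _)
  refine ⟨i, by grind, fun j hj => ?_⟩
  by_cases h : a j = 0
  · simp [h]
  · exact hmax j (by simp [h, hj])

lemma IsGreedySet.exists_notMem_forall_abs_le [Infinite ι] (hL : IsGreedySet a L)
    (ha : a.support.Finite) (F : Finset ι) :
    ∃ i ∉ F, (∀ j ∉ F, |a j| ≤ |a i|) ∧ (F ⊂ L → i ∈ L) := by
  classical
  by_cases hF : F ⊂ L
  · obtain ⟨i, hi, hmax⟩ := Finset.exists_max_image (L \ F) (|a ·|)
      (Finset.sdiff_nonempty.2 hF.not_subset)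
    obtain ⟨hiL, hiF⟩ := Finset.mem_sdiff.1 hi
    refine ⟨i, hiF, fun j hj => ?_, fun _ => hiL⟩
    by_cases hjL : j ∈ L
    · exact hmax j (Finset.mem_sdiff.2 ⟨hjL, hj⟩)
    · exact hL i hiL j hjL
  · obtain ⟨i, hiF, hmax⟩ := SchauderBasisSys.exists_notMem_forall_abs_le ha F
    exact ⟨i, hiF, hmax, fun h => absurd h hF⟩

lemma IsGreedySet.exists_decreasing_enumeration {a : ℕ → ℝ} {L : Finset ℕ}
    (hL : IsGreedySet a L) (ha : a.support.Finite) :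
    ∃ ρ : ℕ → ℕ, Function.Injective ρ ∧ a.support ⊆ Set.range ρ ∧
      (Antitone fun k => |a (ρ k)|) ∧ Lam ρ L.card = L := by
  obtain ⟨ρ, hinj, hρ⟩ := exists_injective_forall_lam (hL.exists_notMem_forall_abs_le ha)
  have abs_le (k : ℕ) : ∀ j ∉ Lam ρ k, |a j| ≤ |a (ρ k)| := (hρ k).1
  have lam_subset (k : ℕ) (hk : k ≤ L.card) : Lam ρ k ⊆ L := by
    induction k with
    | zero => exact Finset.empty_subset L
    | succ k ih =>
      have hsub := ih (by omega)
      have hne : Lam ρ k ≠ L := fun h => by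
        have := card_lam hinj k
        rw [h] at this
        omega
      rw [lam_succ]
      exact Finset.insert_subset ((hρ k).2 (hsub.ssubset_of_ne hne)) hsub
  refine ⟨ρ, hinj, fun n hn => ?_, fun j k hjk => abs_le j _ ?_,
    Finset.eq_of_subset_of_card_le (lam_subset _ le_rfl) (card_lam hinj _).ge⟩
  · by_contra hn_range
    obtain ⟨_, ⟨k, rfl⟩, hk⟩ := (Set.infinite_range_of_injective hinj).exists_notMem_finite ha
    have hle := abs_le k n fun h => by
      obtain ⟨l, -, rfl⟩ := Finset.mem_image.1 h
      exact hn_range ⟨l, rfl⟩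
    rw [Function.notMem_support.1 hk, abs_zero] at hle
    exact hn (abs_nonpos_iff.1 hle)
  · rw [apply_mem_lam_iff hinj]
    omega

end GreedySet

section Coordinates

variable {X : Type*} [NormedAddCommGroup X] [NormedSpace ℝ X] (S : SchauderBasisSys X)

lemma f_sum_smul (A : Finset ℕ) (c : ℕ → ℝ) (i : ℕ) :
    S.f i (∑ j ∈ A, c j • S.e j) = if i ∈ A then c i else 0 := by
  simp [map_sum, S.biorth]

lemma f_P (A : Finset ℕ) (x : X) (i : ℕ) : S.f i (S.P A x) = if i ∈ A then S.f i x else 0 :=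
  S.f_sum_smul A (S.f · x) i

lemma ext_f {x y : X} (h : ∀ i, S.f i x = S.f i y) : x = y := by
  refine tendsto_nhds_unique (S.expansion x) ?_
  simpa only [h] using S.expansion y

lemma P_P_of_subset {A B : Finset ℕ} (h : A ⊆ B) (x : X) : S.P A (S.P B x) = S.P A x :=
  Finset.sum_congr rfl fun i hi => by rw [f_P, if_pos (h hi)]

lemma f_sub_P_range (n : ℕ) (x : X) (i : ℕ) :
    S.f i (x - S.P (Finset.range n) x) = if i < n then 0 else S.f i x := by
  simp only [map_sub, f_P, Finset.mem_range]
  split_ifs <;> simp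

lemma sub_P_range_congr {n : ℕ} {x y : X} (h : ∀ i, n ≤ i → S.f i x = S.f i y) :
    x - S.P (Finset.range n) x = y - S.P (Finset.range n) y :=
  S.ext_f fun i => by
    simp only [f_sub_P_range]
    split_ifs with hi
    · rfl
    · exact h i (not_lt.1 hi)

lemma eq_sub_P_union_add {x y : X} {A B D : Finset ℕ} (hAB : Disjoint A B) (hDA : D ⊆ A)
    (hxy : ∀ i ∉ A, S.f i y = S.f i x) :
    x = (y - S.P (D ∪ B) y) + S.P B x +
      ∑ i ∈ A, (S.f i x - if i ∈ D then 0 else S.f i y) • S.e i := by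
  refine S.ext_f fun i => ?_
  have hiAB : i ∈ A → i ∉ B := fun hiA => Finset.disjoint_left.1 hAB hiA
  have hiDA : i ∈ D → i ∈ A := fun hiD => hDA hiD
  have hi := hxy i
  simp only [map_add, map_sub, f_P, f_sum_smul, Finset.mem_union]
  grind

lemma G_eq_P_lam {ρ : ℕ → ℕ} (hρ : Function.Injective ρ) (x : X) (m : ℕ) :
    S.G x ρ m = S.P (Lam ρ m) x := by
  rw [G, P, Lam, Finset.sum_image hρ.injOn]

/-- The same basis as an instance of Mathlib's `SchauderBasis`. -/
noncomputable def toSchauderBasis : SchauderBasis ℝ X where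
  basis := S.e
  coord := S.f
  ortho i j := by simp [S.biorth, Pi.single_apply]
  expansion x := by
    rw [HasSum, SummationFilter.conditional_filter_eq_map_range, tendsto_map'_iff]
    exact S.expansion x

lemma exists_norm_sub_P_range_le [CompleteSpace X] :
    ∃ K : ℝ, ∀ (n : ℕ) (x : X), ‖x - S.P (Finset.range n) x‖ ≤ K * ‖x‖ := by
  obtain ⟨K, hK⟩ := SchauderBasis.exists_norm_proj_le S.toSchauderBasis
  refine ⟨1 + K, fun n x => ?_⟩
  have norm_P_le : ‖S.P (Finset.range n) x‖ ≤ K * ‖x‖ := by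
    have h := (SchauderBasis.proj S.toSchauderBasis n).le_of_opNorm_le (hK n) x
    rwa [SchauderBasis.proj_apply] at h
  linarith [norm_sub_le x (S.P (Finset.range n) x)]

variable {S}

lemma IsGreedyOrdering.isGreedySet_lam {x : X} {ρ : ℕ → ℕ} (hρ : S.IsGreedyOrdering x ρ)
    (m : ℕ) : IsGreedySet (S.f · x) (Lam ρ m) := by
  obtain ⟨hinj, hrange, hanti⟩ := hρ
  intro i hi j hj
  obtain ⟨k, hk, rfl⟩ := Finset.mem_image.1 hi
  by_cases h : S.f j x = 0
  · simp [h]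
  · obtain ⟨l, rfl⟩ := hrange j h
    rw [apply_mem_lam_iff hinj, not_lt] at hj
    exact hanti k l ((Finset.mem_range.1 hk).le.trans hj)

end Coordinates

section PartiallyGreedy

variable {X : Type*} [NormedAddCommGroup X] [NormedSpace ℝ X] {S : SchauderBasisSys X} {C : ℝ}

/-- The basis is partially greedy with constant `C`, tested on greedy sets instead of greedy
orderings; it also covers vectors without a greedy ordering. -/
def PartiallyGreedyWith (S : SchauderBasisSys X) (C : ℝ) : Prop :=
  ∀ (x : X) (L : Finset ℕ), IsGreedySet (S.f · x) L →
    ‖x - S.P L x‖ ≤ C * ‖x - S.P (Finset.range L.card) x‖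

lemma norm_sub_P_le_of_finite_support
    (hC : ∀ (x : X) (ρ : ℕ → ℕ) (m : ℕ), S.IsGreedyOrdering x ρ →
      ‖x - S.G x ρ m‖ ≤ C * ‖x - S.P (Finset.range m) x‖)
    {x : X} (hx : (Function.support (S.f · x)).Finite) {L : Finset ℕ}
    (hL : IsGreedySet (S.f · x) L) :
    ‖x - S.P L x‖ ≤ C * ‖x - S.P (Finset.range L.card) x‖ := by
  obtain ⟨ρ, hinj, hrange, hanti, hlam⟩ := hL.exists_decreasing_enumeration hx
  have hρ : S.IsGreedyOrdering x ρ := ⟨hinj, fun n hn => hrange hn, fun _ _ hjk => hanti hjk⟩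
  simpa only [S.G_eq_P_lam hinj, hlam] using hC x ρ L.card hρ

lemma PartiallyGreedy.exists_partiallyGreedyWith (hS : S.PartiallyGreedy) :
    ∃ C, 1 ≤ C ∧ S.PartiallyGreedyWith C := by
  obtain ⟨C, hC⟩ := hS
  refine ⟨max C 1, le_max_right C 1, fun x L hL => ?_⟩
  suffices ‖x - S.P L x‖ ≤ C * ‖x - S.P (Finset.range L.card) x‖ from
    this.trans (by gcongr; exact le_max_left C 1)
  have tendsto_norm (A : Finset ℕ) :
      Tendsto (fun n => ‖S.P (Finset.range n) x - S.P A x‖) atTop (𝓝 ‖x - S.P A x‖) :=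
    ((S.expansion x).sub_const _).norm
  refine le_of_tendsto_of_tendsto (tendsto_norm L) ((tendsto_norm _).const_mul C) ?_
  filter_upwards [eventually_ge_atTop (L.sup id + 1), eventually_ge_atTop L.card] with n hsup hcard
  have L_subset : L ⊆ Finset.range n := fun i hi =>
    Finset.mem_range.2 ((Nat.lt_succ_of_le (Finset.le_sup (f := id) hi)).trans_le hsup)
  have finite_support : (Function.support (S.f · (S.P (Finset.range n) x))).Finite :=
    (Finset.range n).finite_toSet.subset fun i hi => by
      by_contra hin
      exact hi ((S.f_P _ x i).trans (if_neg hin))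
  have isGreedySet : IsGreedySet (S.f · (S.P (Finset.range n) x)) L :=
    hL.of_abs_le (fun i hi => by rw [f_P, if_pos (L_subset hi)]) fun j _ => by
      rw [f_P]
      split_ifs <;> simp
  simpa only [S.P_P_of_subset L_subset, S.P_P_of_subset (Finset.range_subset_range.2 hcard)]
    using norm_sub_P_le_of_finite_support hC finite_support isGreedySet

section Tail

variable {x : X} {N : ℕ} {A B : Finset ℕ} {c c' : ℕ → ℝ}

/-- Test the definition on `∑_{i ∈ A} c_i e_i + M ∑_{i < N, i ∉ A} e_i + ∑_{i ≥ N} e_i^*(x) e_i`,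
where `M` is the absolute value of an entry of `x` on `B`: the union of `B` with the indices below
`N` outside `A` is a greedy set of cardinality `N`. -/
lemma PartiallyGreedyWith.norm_sum_add_tail_sub_P_le (hS : S.PartiallyGreedyWith C) (hC : 1 ≤ C)
    (hA : ∀ i ∈ A, i < N) (hBN : ∀ j ∈ B, N ≤ j) (hcard : A.card = B.card)
    (hB : IsGreedySet (S.f · x) B) (hc : ∀ i ∈ A, ∀ j ∈ B, |c i| ≤ |S.f j x|) :
    ‖∑ i ∈ A, c i • S.e i + (x - S.P (Finset.range N) x - S.P B x)‖ ≤
      C * ‖x - S.P (Finset.range N) x‖ := by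
  obtain rfl | ⟨j₀, hj₀⟩ := B.eq_empty_or_nonempty
  · obtain rfl := Finset.card_eq_zero.1 hcard
    simpa [P] using le_mul_of_one_le_left (norm_nonneg _) hC
  set d : ℕ → ℝ := fun i => if i ∈ A then c i else |S.f j₀ x| with hd
  set v : X := ∑ i ∈ Finset.range N, d i • S.e i + (x - S.P (Finset.range N) x) with hv
  set L : Finset ℕ := (Finset.range N \ A) ∪ B with hL
  have f_v (i : ℕ) : S.f i v = if i < N then d i else S.f i x := by
    simp only [hv, map_add, f_sum_smul, f_sub_P_range, Finset.mem_range]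
    split_ifs <;> simp
  have card_L : L.card = N := by
    have hsub : A ⊆ Finset.range N := fun i hi => Finset.mem_range.2 (hA i hi)
    have hdisj : Disjoint (Finset.range N \ A) B := Finset.disjoint_left.2 fun i hi hiB =>
      (hBN i hiB).not_gt (Finset.mem_range.1 (Finset.mem_sdiff.1 hi).1)
    rw [Finset.card_union_of_disjoint hdisj, ← hcard, Finset.card_sdiff_add_card_eq_card hsub,
      Finset.card_range]
  have greedy_L : IsGreedySet (S.f · v) L := by
    refine isGreedySet_union (fun i hi => ⟨j₀, hj₀, ?_⟩) fun i hi j hj => ?_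
    · obtain ⟨hiN, hiA⟩ := Finset.mem_sdiff.1 hi
      simp [f_v, hd, hiA, Finset.mem_range.1 hiN, (hBN j₀ hj₀).not_gt]
    · rw [f_v i, if_neg (hBN i hi).not_gt, f_v j]
      split_ifs with hjN
      · have hjA : j ∈ A := by simp_all
        simpa only [hd, if_pos hjA] using hc j hjA i hi
      · exact hB i hi j fun hjB => hj (Finset.mem_union_right _ hjB)
  have residual_eq : v - S.P L v =
      ∑ i ∈ A, c i • S.e i + (x - S.P (Finset.range N) x - S.P B x) := by
    refine S.ext_f fun i => ?_
    simp only [map_add, map_sub, f_sum_smul, f_P, f_v, hd, hL, Finset.mem_union,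
      Finset.mem_sdiff, Finset.mem_range]
    grind
  have tail_eq : v - S.P (Finset.range N) v = x - S.P (Finset.range N) x :=
    S.sub_P_range_congr fun i hi => by rw [f_v, if_neg hi.not_gt]
  simpa only [residual_eq, card_L, tail_eq] using hS v L greedy_L

lemma PartiallyGreedyWith.norm_sum_sub_le (hS : S.PartiallyGreedyWith C) (hC : 1 ≤ C)
    (hA : ∀ i ∈ A, i < N) (hBN : ∀ j ∈ B, N ≤ j) (hcard : A.card = B.card)
    (hB : IsGreedySet (S.f · x) B) (hc : ∀ i ∈ A, ∀ j ∈ B, |c i| ≤ |S.f j x|)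
    (hc' : ∀ i ∈ A, ∀ j ∈ B, |c' i| ≤ |S.f j x|) :
    ‖∑ i ∈ A, (c i - c' i) • S.e i‖ ≤ 2 * C * ‖x - S.P (Finset.range N) x‖ := by
  set u := x - S.P (Finset.range N) x
  calc ‖∑ i ∈ A, (c i - c' i) • S.e i‖
      = ‖(∑ i ∈ A, c i • S.e i + (u - S.P B x)) -
          (∑ i ∈ A, c' i • S.e i + (u - S.P B x))‖ := by
        simp only [sub_smul, Finset.sum_sub_distrib, add_sub_add_right_eq_sub]
    _ ≤ C * ‖u‖ + C * ‖u‖ := norm_sub_le_of_le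
        (hS.norm_sum_add_tail_sub_P_le hC hA hBN hcard hB hc)
        (hS.norm_sum_add_tail_sub_P_le hC hA hBN hcard hB hc')
    _ = 2 * C * ‖u‖ := by ring

lemma PartiallyGreedyWith.norm_P_le (hS : S.PartiallyGreedyWith C) (hC : 1 ≤ C)
    (hcard : B.card ≤ N) (hBN : ∀ j ∈ B, N ≤ j) (hB : IsGreedySet (S.f · x) B) :
    ‖S.P B x‖ ≤ (C + 1) * ‖x - S.P (Finset.range N) x‖ := by
  set u := x - S.P (Finset.range N) x
  have norm_sub_le : ‖u - S.P B x‖ ≤ C * ‖u‖ := by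
    simpa using hS.norm_sum_add_tail_sub_P_le (c := 0) hC
      (fun i hi => (Finset.mem_range.1 hi).trans_le hcard) hBN (Finset.card_range _) hB (by simp)
  calc ‖S.P B x‖ = ‖u - (u - S.P B x)‖ := by rw [sub_sub_cancel]
    _ ≤ ‖u‖ + C * ‖u‖ := norm_sub_le_of_le le_rfl norm_sub_le
    _ = (C + 1) * ‖u‖ := by ring

end Tail

lemma PartiallyGreedyWith.norm_le_of_f_eq_off (hS : S.PartiallyGreedyWith C) (hC : 1 ≤ C) {K : ℝ}
    (hK : ∀ (n : ℕ) (z : X), ‖z - S.P (Finset.range n) z‖ ≤ K * ‖z‖) {x y : X} {A B : Finset ℕ}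
    (hB : IsGreedySet (S.f · x) B) (hcard : A.card = B.card) (hAB : ∀ i ∈ A, ∀ j ∈ B, i < j)
    (hxy : ∀ i ∉ A, S.f i y = S.f i x) :
    ‖x‖ ≤ (4 * C + 1) * K * ‖y‖ := by
  set D := largeIndices (S.f · y) A B
  set N := A.sup Nat.succ
  set u := x - S.P (Finset.range N) x
  set c : ℕ → ℝ := fun i => if i ∈ D then 0 else S.f i y with hc
  have hdisj : Disjoint A B := Finset.disjoint_left.2 fun i hA hB => (hAB i hA i hB).false
  have hA : ∀ i ∈ A, i < N := fun i hi => Finset.le_sup (f := Nat.succ) hi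
  have hBN : ∀ j ∈ B, N ≤ j := fun j hj => Finset.sup_le fun i hi => hAB i hi j hj
  have card_le : B.card ≤ N := hcard ▸ Finset.card_range N ▸
    Finset.card_le_card fun i hi => Finset.mem_range.2 (hA i hi)
  have hxy_B : ∀ j ∈ B, S.f j y = S.f j x := fun j hj => hxy j (Finset.disjoint_right.1 hdisj hj)
  have greedy_y : IsGreedySet (S.f · y) (D ∪ B) :=
    isGreedySet_largeIndices_union fun i hi j hjB hjA => by
      simpa only [hxy j hjA, hxy_B i hi] using hB i hi j hjB
  have norm_residual_le : ‖y - S.P (D ∪ B) y‖ ≤ C * (K * ‖y‖) :=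
    (hS y _ greedy_y).trans (by gcongr; exact hK _ y)
  have c_le : ∀ i ∈ A, ∀ j ∈ B, |c i| ≤ |S.f j x| := fun i hi j hj => by
    by_cases hiD : i ∈ D
    · simp [hc, hiD]
    · simpa only [hc, if_neg hiD, hxy_B j hj] using abs_le_of_notMem_largeIndices hi hiD hj
  have norm_sum_le : ‖∑ i ∈ A, (S.f i x - c i) • S.e i‖ ≤ 2 * C * ‖u‖ :=
    hS.norm_sum_sub_le hC hA hBN hcard hB
      (fun i hi j hj => hB j hj i (Finset.disjoint_left.1 hdisj hi)) c_le
  have norm_u_le : ‖u‖ ≤ K * ‖y‖ := by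
    have u_eq : u = y - S.P (Finset.range N) y := S.sub_P_range_congr fun i hi =>
      (hxy i fun hiA => (hA i hiA).not_ge hi).symm
    exact u_eq ▸ hK N y
  calc ‖x‖ = ‖(y - S.P (D ∪ B) y) + S.P B x + ∑ i ∈ A, (S.f i x - c i) • S.e i‖ :=
        congrArg norm (S.eq_sub_P_union_add hdisj (Finset.filter_subset _ _) hxy)
    _ ≤ C * (K * ‖y‖) + (C + 1) * ‖u‖ + 2 * C * ‖u‖ :=
        norm_add_le_of_le
          (norm_add_le_of_le norm_residual_le (hS.norm_P_le hC card_le hBN hB)) norm_sum_le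
    _ ≤ C * (K * ‖y‖) + (C + 1) * (K * ‖y‖) + 2 * C * (K * ‖y‖) := by gcongr
    _ = (4 * C + 1) * K * ‖y‖ := by ring

end PartiallyGreedy

end SchauderBasisSys

/-- If a Schauder basis of a real Banach space is partially greedy, then
there is a constant `C₁` such that for every `x`, every `m`, every greedy ordering for
`x`, every finite `A` with `|A| ≤ m` all of whose elements are below
`α_m(x) = min Λ_m(x)`, and every `y` agreeing with `x` in all coordinates outside `A`,
one has `‖x‖ ≤ C₁ ‖y‖`. -/
theorem stmt_18 {X : Type*} [NormedAddCommGroup X] [NormedSpace ℝ X] [CompleteSpace X]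
    (S : SchauderBasisSys X) (hPG : S.PartiallyGreedy) :
    ∃ C₁ : ℝ, ∀ (x y : X) (ρ : ℕ → ℕ) (m : ℕ) (A : Finset ℕ),
      S.IsGreedyOrdering x ρ → A.card ≤ m →
      (∀ i ∈ A, ∀ j ∈ Lam ρ m, i < j) →
      (∀ i : ℕ, i ∉ A → S.f i y = S.f i x) →
      ‖x‖ ≤ C₁ * ‖y‖ := by
  obtain ⟨C, hC, hS⟩ := hPG.exists_partiallyGreedyWith
  obtain ⟨K, hK⟩ := S.exists_norm_sub_P_range_le
  refine ⟨(4 * C + 1) * K, fun x y ρ m A hρ hAm hlt hxy => ?_⟩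
  have lam_subset : Lam ρ A.card ⊆ Lam ρ m :=
    Finset.image_subset_image (Finset.range_subset_range.2 hAm)
  exact hS.norm_le_of_f_eq_off hC hK (hρ.isGreedySet_lam A.card) (card_lam hρ.1 A.card).symm
    (fun i hi j hj => hlt i hi j (lam_subset hj)) hxy
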